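/- arXiv:0708.1113 — 6 statements merged into one kernel-verified Lean document; each statement's English description precedes it below -/
import Mathlib

section
/- Let k be a nontrivially normed field, V a nonzero finite-dimensional k-vector space, and let N₁, N₂ : V → ℝ be norms on V, i.e. N_j(v) = 0 if and only if v = 0, N_j(λv) = ‖λ‖·N_j(v) for λ ∈ k, and N_j(v+w) ≤ N_j(v) + N_j(w). Assume there exist c₀ > 0 and α₀ ≥ 1 with α₀⁻¹·N₁(v) ≤ c₀·N₂(v) ≤ α₀·N₁(v) for all v. Then ( inf { α ≥ 1 : ∃ c > 0, ∀ v ∈ V, α⁻¹·N₁(v) ≤ c·N₂(v) ≤ α·N₁(v) } )² = sup { ( N₁(v₁)·N₂(v₂) ) / ( N₂(v₁)·N₁(v₂) ) : v₁, v₂ ∈ V, v₁ ≠ 0, v₂ ≠ 0 }. -/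
/-! Write `r = f / g` for the ratio of the two norms on nonzero vectors. A scaling `c` satisfies
`α⁻¹ f ≤ c g ≤ α f` exactly when `α⁻¹ r x ≤ c ≤ α r y` for all nonzero `x` and `y`. By
completeness of `ℝ` such a `c` exists as soon as every lower bound is at most every upper bound,
that is, when `r x / r y ≤ α ^ 2` for all `x` and `y`. So the admissible `α` are those whose
square bounds the cross-ratios, and the least one is the square root of their supremum. -/

/-- A real-valued function on a pointed set that vanishes at the base point and is positive
elsewhere, as every norm does. -/
structure IsPositiveDefinite {X : Type*} [Zero X] (f : X → ℝ) : Prop where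
  map_zero : f 0 = 0
  pos_of_ne_zero : ∀ {x}, x ≠ 0 → 0 < f x

/-- The `α ≥ 1` whose logarithm bounds the distance from `f` to some rescaling of `g`; the
infimum is the exponential of the distance between the homothety classes of `f` and `g`. -/
def homothetyBounds {X : Type*} (f g : X → ℝ) : Set ℝ :=
  {α | 1 ≤ α ∧ ∃ c, 0 < c ∧ ∀ x, α⁻¹ * f x ≤ c * g x ∧ c * g x ≤ α * f x}

/-- The cross-ratios of `f` and `g`, that is, the quotients of two values of `f / g` at nonzero
points. -/
def crossRatios {X : Type*} [Zero X] (f g : X → ℝ) : Set ℝ :=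
  {ρ | ∃ x y, x ≠ 0 ∧ y ≠ 0 ∧ ρ = (f x * g y) / (g x * f y)}

theorem isPositiveDefinite_of_subadditive_of_homogeneous (k : Type*) {V : Type*} [SeminormedRing k]
    [AddCommGroup V] [Module k V] {N : V → ℝ} (hzero : ∀ v, N v = 0 → v = 0)
    (hadd : ∀ v w, N (v + w) ≤ N v + N w) (hsmul : ∀ (c : k) (v : V), N (c • v) = ‖c‖ * N v) :
    IsPositiveDefinite N where
  map_zero := _root_.map_zero (Seminorm.of N hadd hsmul)
  pos_of_ne_zero {v} hv :=
    (apply_nonneg (Seminorm.of N hadd hsmul) v).lt_of_ne' (mt (hzero v) hv)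

theorem isLeast_sqrt_of_isLUB {R : Set ℝ} {S a : ℝ} (hS : IsLUB R S) (ha : 0 ≤ a)
    (haS : a ^ 2 ≤ S) : IsLeast {α | a ≤ α ∧ α ^ 2 ∈ upperBounds R} (√S) := by
  refine ⟨⟨Real.le_sqrt_of_sq_le haS, ?_⟩, ?_⟩
  · rw [Real.sq_sqrt ((sq_nonneg a).trans haS)]
    exact hS.1
  · rintro α ⟨haα, hα⟩
    exact Real.sqrt_le_iff.2 ⟨ha.trans haα, hS.2 hα⟩

namespace IsPositiveDefinite

variable {X : Type*} [Zero X] {f g : X → ℝ}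

theorem div_pos_of_ne_zero (hf : IsPositiveDefinite f) (hg : IsPositiveDefinite g)
    {x : X} (hx : x ≠ 0) : 0 < f x / g x :=
  div_pos (hf.pos_of_ne_zero hx) (hg.pos_of_ne_zero hx)

theorem one_mem_crossRatios [Nontrivial X] (hf : IsPositiveDefinite f)
    (hg : IsPositiveDefinite g) : 1 ∈ crossRatios f g := by
  obtain ⟨x, hx⟩ := exists_ne (0 : X)
  refine ⟨x, x, hx, hx, ?_⟩
  rw [mul_comm (g x), div_self (mul_pos (hf.pos_of_ne_zero hx) (hg.pos_of_ne_zero hx)).ne']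

theorem mem_upperBounds_crossRatios_iff (hf : IsPositiveDefinite f) (hg : IsPositiveDefinite g)
    {B : ℝ} : B ∈ upperBounds (crossRatios f g) ↔
      ∀ x y, x ≠ 0 → y ≠ 0 → f x / g x ≤ B * (f y / g y) := by
  have crossRatio_le_iff (x : X) {y : X} (hy : y ≠ 0) :
      (f x * g y) / (g x * f y) ≤ B ↔ f x / g x ≤ B * (f y / g y) := by
    rw [← div_le_iff₀ (hf.div_pos_of_ne_zero hg hy), div_div_div_eq]
  constructor
  · exact fun hB x y hx hy ↦ (crossRatio_le_iff x hy).1 (hB ⟨x, y, hx, hy, rfl⟩)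
  · rintro hB _ ⟨x, y, hx, hy, rfl⟩
    exact (crossRatio_le_iff x hy).2 (hB x y hx hy)

theorem forall_scaling_iff_forall_div (hf : IsPositiveDefinite f) (hg : IsPositiveDefinite g)
    {α c : ℝ} :
    (∀ x, α⁻¹ * f x ≤ c * g x ∧ c * g x ≤ α * f x) ↔
      ∀ x, x ≠ 0 → α⁻¹ * (f x / g x) ≤ c ∧ c ≤ α * (f x / g x) := by
  refine forall_congr' fun x ↦ ?_
  rcases eq_or_ne x 0 with rfl | hx
  · simp [hf.map_zero, hg.map_zero]
  · have hgx := hg.pos_of_ne_zero hx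
    simp only [ne_eq, hx, not_false_eq_true, forall_const, ← mul_div_assoc, div_le_iff₀ hgx,
      le_div_iff₀ hgx]

theorem exists_scaling_iff_sq_mem_upperBounds [Nontrivial X] (hf : IsPositiveDefinite f)
    (hg : IsPositiveDefinite g) {α : ℝ} (hα : 0 < α) :
    (∃ c, 0 < c ∧ ∀ x, α⁻¹ * f x ≤ c * g x ∧ c * g x ≤ α * f x) ↔
      α ^ 2 ∈ upperBounds (crossRatios f g) := by
  have inv_mul_le_mul_iff (r s : ℝ) : α⁻¹ * r ≤ α * s ↔ r ≤ α ^ 2 * s := by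
    rw [inv_mul_le_iff₀ hα, sq, mul_assoc]
  simp only [hf.forall_scaling_iff_forall_div hg, hf.mem_upperBounds_crossRatios_iff hg,
    ← inv_mul_le_mul_iff]
  constructor
  · rintro ⟨c, -, hc⟩ x y hx hy
    exact (hc x hx).1.trans (hc y hy).2
  · intro h
    obtain ⟨z, hz⟩ := exists_ne (0 : X)
    have hne : ({x | x ≠ 0} : Set X).Nonempty := ⟨z, hz⟩
    obtain ⟨c, hlower, hupper⟩ := exists_between_of_forall_le
      (hne.image fun x ↦ α⁻¹ * (f x / g x)) (hne.image fun y ↦ α * (f y / g y))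
      (Set.forall_mem_image.2 fun x hx ↦ Set.forall_mem_image.2 fun y hy ↦ h x y hx hy)
    have hc (x : X) (hx : x ≠ 0) : α⁻¹ * (f x / g x) ≤ c ∧ c ≤ α * (f x / g x) :=
      ⟨hlower (Set.mem_image_of_mem _ hx), hupper (Set.mem_image_of_mem _ hx)⟩
    have hzpos : 0 < α⁻¹ * (f z / g z) := mul_pos (inv_pos.2 hα) (hf.div_pos_of_ne_zero hg hz)
    exact ⟨c, hzpos.trans_le (hc z hz).1, hc⟩

theorem homothetyBounds_eq_setOf_sq_mem_upperBounds [Nontrivial X] (hf : IsPositiveDefinite f)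
    (hg : IsPositiveDefinite g) :
    homothetyBounds f g = {α | 1 ≤ α ∧ α ^ 2 ∈ upperBounds (crossRatios f g)} :=
  Set.ext fun _ ↦ and_congr_right fun hα ↦
    hf.exists_scaling_iff_sq_mem_upperBounds hg (zero_lt_one.trans_le hα)

end IsPositiveDefinite

theorem dist_of_norm_classes_eq_sup_cross_ratio_general {X : Type*} [Zero X] [Nontrivial X]
    {f g : X → ℝ} (hf : IsPositiveDefinite f) (hg : IsPositiveDefinite g)
    (hfg : (homothetyBounds f g).Nonempty) :
    sInf (homothetyBounds f g) ^ 2 = sSup (crossRatios f g) := by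
  rw [hf.homothetyBounds_eq_setOf_sq_mem_upperBounds hg] at hfg ⊢
  obtain ⟨α, -, hα⟩ := hfg
  have one_mem := hf.one_mem_crossRatios hg
  have isLUB : IsLUB (crossRatios f g) (sSup (crossRatios f g)) :=
    isLUB_csSup ⟨1, one_mem⟩ ⟨α ^ 2, hα⟩
  have one_le : 1 ≤ sSup (crossRatios f g) := isLUB.1 one_mem
  rw [(isLeast_sqrt_of_isLUB isLUB zero_le_one (by rwa [one_pow])).csInf_eq,
    Real.sq_sqrt (zero_le_one.trans one_le)]

/-- The distance between homothety classes of two norms on a nonzero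
finite-dimensional vector space over a nontrivially normed field: the square of
the least `α ≥ 1` such that `α⁻¹ N₁ ≤ c N₂ ≤ α N₁` for some rescaling `c > 0`
equals the supremum of the cross-ratios `N₁(v₁)N₂(v₂) / (N₂(v₁)N₁(v₂))`. -/
theorem dist_of_norm_classes_eq_sup_cross_ratio
    (k V : Type*) [NontriviallyNormedField k] [AddCommGroup V] [Module k V]
    [FiniteDimensional k V] [Nontrivial V]
    (N₁ N₂ : V → ℝ)
    (h₁zero : ∀ v, N₁ v = 0 ↔ v = 0) (h₂zero : ∀ v, N₂ v = 0 ↔ v = 0)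
    (h₁smul : ∀ (c : k) (v : V), N₁ (c • v) = ‖c‖ * N₁ v)
    (h₂smul : ∀ (c : k) (v : V), N₂ (c • v) = ‖c‖ * N₂ v)
    (h₁add : ∀ v w, N₁ (v + w) ≤ N₁ v + N₁ w)
    (h₂add : ∀ v w, N₂ (v + w) ≤ N₂ v + N₂ w)
    (c₀ α₀ : ℝ) (hc₀ : 0 < c₀) (hα₀ : 1 ≤ α₀)
    (hcomp : ∀ v, α₀⁻¹ * N₁ v ≤ c₀ * N₂ v ∧ c₀ * N₂ v ≤ α₀ * N₁ v) :
    (sInf {α : ℝ | 1 ≤ α ∧ ∃ c : ℝ, 0 < c ∧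
        ∀ v, α⁻¹ * N₁ v ≤ c * N₂ v ∧ c * N₂ v ≤ α * N₁ v}) ^ 2 =
      sSup {ρ : ℝ | ∃ v₁ v₂ : V, v₁ ≠ 0 ∧ v₂ ≠ 0 ∧
        ρ = (N₁ v₁ * N₂ v₂) / (N₂ v₁ * N₁ v₂)} :=
  dist_of_norm_classes_eq_sup_cross_ratio_general
    (isPositiveDefinite_of_subadditive_of_homogeneous k (fun v ↦ (h₁zero v).1) h₁add h₁smul)
    (isPositiveDefinite_of_subadditive_of_homogeneous k (fun v ↦ (h₂zero v).1) h₂add h₂smul)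
    ⟨α₀, hα₀, c₀, hc₀, hcomp⟩
end

section
/- Let F be a field of characteristic different from 2, let G be a symmetric invertible 3×3 matrix over F, and let X be a 3×3 matrix over F satisfying Xᵀ·G + G·X = 0 (i.e. X lies in the orthogonal Lie algebra of the nondegenerate quadratic form determined by G) and X·X = 0. Then X = 0. -/
open Matrix

/-!
If `Xᵀ G + G X = 0` with `G` symmetric, then `G X` is alternating, since `2 ≠ 0`. The principal
`2 × 2` minors of an alternating matrix `A` are the squares `A i j ^ 2`, so an alternating matrix of
rank at most one vanishes. As `X ^ 2 = 0` puts the range of `X` inside its kernel, in dimension at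
most three `X`, hence `G X`, has rank at most one.
-/

section Rank

variable {R l m n : Type*} [CommRing R] [IsDomain R]

-- The kernel of `A` need not be finitely generated over `R`, so `A` is factored through the
-- quotient by the range of `B` instead.
theorem rank_add_rank_le_card_of_mul_eq_zero_of_isDomain [Fintype m] [Fintype n]
    {A : Matrix l m R} {B : Matrix m n R} (hAB : A * B = 0) :
    A.rank + B.rank ≤ Fintype.card m := by
  have h_range : B.mulVecLin.range ≤ A.mulVecLin.ker := by
    rw [LinearMap.range_le_ker_iff, ← mulVecLin_mul, hAB, mulVecLin_zero]
  have h_rank : A.rank ≤ Module.finrank R ((m → R) ⧸ B.mulVecLin.range) := by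
    rw [rank, ← Submodule.range_liftQ _ A.mulVecLin h_range]
    exact LinearMap.finrank_range_le _
  calc A.rank + B.rank
      ≤ Module.finrank R ((m → R) ⧸ B.mulVecLin.range) + B.rank := by gcongr
    _ = Module.finrank R (m → R) := Submodule.finrank_quotient_add_finrank _
    _ = Fintype.card m := Module.finrank_fintype_fun_eq_card R

theorem det_submatrix_eq_zero_of_rank_lt_card [Fintype n] [Fintype l] [DecidableEq l]
    {A : Matrix m n R} (hA : A.rank < Fintype.card l) (r : l → m) (c : l → n) :
    (A.submatrix r c).det = 0 := by
  by_contra h_det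
  have h_le : (A.submatrix r c).rank ≤ A.rank := rank_submatrix_le A r c
  rw [rank_of_det_ne_zero h_det] at h_le
  exact h_le.not_gt hA

end Rank

section Skew

variable {R n : Type*} [CommRing R]

theorem transpose_mul_eq_neg_of_isSymm [Fintype n] {G X : Matrix n n R} (hG : G.IsSymm)
    (hX : Xᵀ * G + G * X = 0) : (G * X)ᵀ = -(G * X) := by
  rw [transpose_mul, hG.eq]
  exact eq_neg_of_add_eq_zero_left hX

theorem apply_self_eq_zero_of_transpose_eq_neg [NoZeroDivisors R] (h2 : (2 : R) ≠ 0)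
    {A : Matrix n n R} (hA : Aᵀ = -A) (i : n) : A i i = 0 := by
  have h_diag : A i i = -A i i := congr_fun₂ hA i i
  have h_two_mul : 2 * A i i = 0 := by linear_combination h_diag
  exact (mul_eq_zero.mp h_two_mul).resolve_left h2

theorem det_submatrix_pair_of_transpose_eq_neg {A : Matrix n n R} (hA : Aᵀ = -A)
    (h_diag : ∀ i, A i i = 0) (i j : n) :
    (A.submatrix ![i, j] ![i, j]).det = A i j ^ 2 := by
  have h_skew : A j i = -A i j := congr_fun₂ hA i j
  rw [det_fin_two]
  simp [h_diag, h_skew, sq]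

variable [IsDomain R] [Fintype n]

theorem eq_zero_of_transpose_eq_neg_of_rank_le_one {A : Matrix n n R} (hA : Aᵀ = -A)
    (h_diag : ∀ i, A i i = 0) (h_rank : A.rank ≤ 1) : A = 0 := by
  ext i j
  have h_minor : (A.submatrix ![i, j] ![i, j]).det = 0 :=
    det_submatrix_eq_zero_of_rank_lt_card (by simpa [Nat.lt_succ_iff] using h_rank) _ _
  rw [det_submatrix_pair_of_transpose_eq_neg hA h_diag] at h_minor
  exact pow_eq_zero_iff two_ne_zero |>.mp h_minor

theorem eq_zero_of_transpose_mul_add_mul_eq_zero_of_rank_le_one [DecidableEq n]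
    (h2 : (2 : R) ≠ 0) {G X : Matrix n n R} (hG : G.IsSymm) (hG_det : G.det ≠ 0)
    (hX : Xᵀ * G + G * X = 0) (h_rank : X.rank ≤ 1) : X = 0 := by
  have h_skew : (G * X)ᵀ = -(G * X) := transpose_mul_eq_neg_of_isSymm hG hX
  have h_mul : G * X = 0 :=
    eq_zero_of_transpose_eq_neg_of_rank_le_one h_skew
      (apply_self_eq_zero_of_transpose_eq_neg h2 h_skew) ((rank_mul_le_right G X).trans h_rank)
  ext i j
  have h_col : X.col j = 0 :=
    eq_zero_of_mulVec_eq_zero hG_det (congr_arg (fun M ↦ M.col j) h_mul)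
  exact congr_fun h_col i

theorem so3_no_square_zero_nilpotent_general [DecidableEq n] (hn : Fintype.card n ≤ 3)
    (h2 : (2 : R) ≠ 0) {G X : Matrix n n R} (hG : G.IsSymm) (hG_det : G.det ≠ 0)
    (hX : Xᵀ * G + G * X = 0) (hX2 : X * X = 0) : X = 0 := by
  have h_rank : X.rank + X.rank ≤ Fintype.card n :=
    rank_add_rank_le_card_of_mul_eq_zero_of_isDomain hX2
  exact eq_zero_of_transpose_mul_add_mul_eq_zero_of_rank_le_one h2 hG hG_det hX (by lia)

end Skew

/-- Over a field of characteristic different from 2, the orthogonal Lie algebra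
of a nondegenerate quadratic form in dimension 3 contains no nonzero
square-zero matrix: if `Xᵀ G + G X = 0` with `G` symmetric invertible and
`X² = 0`, then `X = 0`. -/
theorem so3_no_square_zero_nilpotent
    (F : Type*) [Field F] (h2 : (2 : F) ≠ 0)
    (G X : Matrix (Fin 3) (Fin 3) F) (hG : G.IsSymm) (hGunit : IsUnit G)
    (hX : Xᵀ * G + G * X = 0) (hX2 : X * X = 0) : X = 0 :=
  so3_no_square_zero_nilpotent_general (Fintype.card_fin 3).le h2 hG
    ((isUnit_iff_isUnit_det G).mp hGunit).ne_zero hX hX2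
end

section
/- Let F be a field, n ≥ 1 an integer, and let A be an étale subalgebra of Mₙ(F) of dimension n, i.e. a commutative F-subalgebra A of the n×n matrices over F such that A is reduced (its only nilpotent element is 0) and dim_F A = n. Then there exists a vector v ∈ Fⁿ such that the F-linear map A → Fⁿ sending a to a·v (matrix times column vector) is a bijection. In particular, Fⁿ is a free A-module of rank 1. -/
/-!
A reduced finite-dimensional algebra `A` is semisimple, so all its left ideals are generated by
idempotents, and reducedness makes those idempotents central. Choose `v` in an `A`-module `M` with
minimal annihilator, say `A e`. For each `w` the annihilator of `v + e w` is the intersection of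
those of `v` and `e w`, so by minimality it still contains `e`, that is, `e w = e (v + e w) = 0`.
Hence `e` kills `M`, and `e = 0` when the action is faithful. Then `a ↦ a v` is injective, and it
is bijective when the dimensions agree.
-/

theorem mul_eq_zero_swap_of_isReduced {R : Type*} [MonoidWithZero R] [IsReduced R] {a b : R}
    (h : a * b = 0) : b * a = 0 := by
  refine eq_zero_of_pow_eq_zero (n := 2) ?_
  calc (b * a) ^ 2 = b * (a * b) * a := by simp only [sq, mul_assoc]
    _ = 0 := by rw [h, mul_zero, zero_mul]

section ReducedRing

variable {R : Type*} [Ring R] [IsReduced R]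

theorem commute_of_isIdempotentElem_of_isReduced {e : R} (he : IsIdempotentElem e) (a : R) :
    Commute e a := by
  have left : (1 - e) * a * e = 0 :=
    mul_eq_zero_swap_of_isReduced (by rw [← mul_assoc, he.mul_one_sub_self, zero_mul])
  have right : e * (a * (1 - e)) = 0 :=
    mul_eq_zero_swap_of_isReduced (by rw [mul_assoc, he.one_sub_mul_self, mul_zero])
  calc e * a = e * a * e := by
        rwa [← mul_assoc, mul_sub, mul_one, sub_eq_zero] at right
    _ = a * e := by
        rw [sub_mul, one_mul, sub_mul, sub_eq_zero] at left
        exact left.symm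

theorem isSemisimpleRing_of_isSemiprimaryRing_of_isReduced [IsSemiprimaryRing R] :
    IsSemisimpleRing R := by
  obtain ⟨n, hn⟩ := IsSemiprimaryRing.isNilpotent (R := R)
  have jacobson_eq_bot : Ring.jacobson R = ⊥ :=
    eq_bot_iff.2 fun x hx ↦ eq_zero_of_pow_eq_zero (Ideal.pow_eq_zero_of_mem hn le_rfl hx)
  exact ((Ideal.quotEquivOfEq jacobson_eq_bot).trans (RingEquiv.quotientBot R)).isSemisimpleRing

end ReducedRing

theorem torsionOf_add_smul_of_isIdempotentElem {R M : Type*} [Semiring R] [AddCommMonoid M]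
    [Module R M] {e : R} (he : IsIdempotentElem e) (hcomm : ∀ a, Commute e a) {v : M}
    (hv : e • v = 0) (w : M) :
    Ideal.torsionOf R M (v + e • w) = Ideal.torsionOf R M v ⊓ Ideal.torsionOf R M (e • w) := by
  ext a
  simp only [Submodule.mem_inf, Ideal.mem_torsionOf_iff, smul_add]
  refine ⟨fun h ↦ ?_, fun ⟨hav, haw⟩ ↦ by rw [hav, haw, add_zero]⟩
  have haw : a • e • w = 0 := by
    calc a • e • w = e • (a • v + a • e • w) := by
          simp only [smul_add, smul_smul, ← mul_assoc, (hcomm a).eq]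
          simp only [mul_assoc, he.eq, mul_smul, hv, smul_zero, zero_add]
      _ = 0 := by rw [h, smul_zero]
  exact ⟨by rwa [haw, add_zero] at h, haw⟩

theorem exists_torsionOf_eq_annihilator (R M : Type*) [Ring R] [IsReduced R] [IsSemisimpleRing R]
    [AddCommGroup M] [Module R M] : ∃ v : M, Ideal.torsionOf R M v = Module.annihilator R M := by
  obtain ⟨_, ⟨v, rfl⟩, hmin⟩ := IsArtinian.set_has_minimal
    (Set.range (Ideal.torsionOf R M)) (Set.range_nonempty _)
  obtain ⟨e, he, hspan⟩ := IsSemisimpleRing.ideal_eq_span_idempotent (Ideal.torsionOf R M v)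
  have hev : e ∈ Ideal.torsionOf R M v := hspan ▸ Ideal.mem_span_singleton_self e
  have e_smul (w : M) : e • w = 0 := by
    have hinf := torsionOf_add_smul_of_isIdempotentElem he
      (commute_of_isIdempotentElem_of_isReduced he) hev w
    have heq : Ideal.torsionOf R M (v + e • w) = Ideal.torsionOf R M v :=
      (hinf.trans_le inf_le_left).eq_of_not_lt (hmin _ ⟨_, rfl⟩)
    have hew : e • e • w = 0 := (inf_eq_left.1 (hinf.symm.trans heq)) hev
    rwa [smul_smul, he.eq] at hew
  refine ⟨v, le_antisymm ?_ fun a ha ↦ Module.mem_annihilator.1 ha v⟩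
  rw [hspan, Ideal.span_singleton_le_iff_mem]
  exact Module.mem_annihilator.2 e_smul

theorem finite_of_faithfulSMul (R A M : Type*) [CommRing R] [IsNoetherianRing R] [Semiring A]
    [Algebra R A] [AddCommGroup M] [Module R M] [Module A M] [IsScalarTower R A M]
    [FaithfulSMul A M] [Module.Finite R M] : Module.Finite R A :=
  .of_injective (Algebra.lsmul R R M).toLinearMap fun _ _ h ↦
    FaithfulSMul.eq_of_smul_eq_smul (LinearMap.congr_fun h)

theorem etale_subalgebra_cyclic_vector_general {F A M : Type*} [Field F] [Ring A] [Algebra F A]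
    [IsReduced A] [AddCommGroup M] [Module F M] [Module A M] [IsScalarTower F A M]
    [FaithfulSMul A M] [Module.Finite F M] (hdim : Module.finrank F A = Module.finrank F M) :
    ∃ v : M, Function.Bijective fun a : A ↦ a • v := by
  have : Module.Finite F A := finite_of_faithfulSMul F A M
  have : IsArtinianRing A := .of_finite F A
  have : IsSemisimpleRing A := isSemisimpleRing_of_isSemiprimaryRing_of_isReduced
  obtain ⟨v, hv⟩ := exists_torsionOf_eq_annihilator A M
  let orbitMap : A →ₗ[A] M := LinearMap.toSpanSingleton A M v
  have hinj : Function.Injective orbitMap :=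
    LinearMap.ker_eq_bot.1 (hv.trans (Module.annihilator_eq_bot.2 inferInstance))
  have hsurj : Function.Surjective (orbitMap.restrictScalars F) :=
    (LinearMap.injective_iff_surjective_of_finrank_eq_finrank hdim).1 hinj
  exact ⟨v, hinj, hsurj⟩

instance faithfulSMul_matrix {ι R : Type*} [Fintype ι] [DecidableEq ι] [Semiring R] :
    FaithfulSMul (Matrix ι ι R) (ι → R) :=
  ⟨Matrix.ext_iff_smul.2⟩

/-- If `A ⊆ Mₙ(F)` is an étale (commutative, reduced) subalgebra of dimension
`n`, then `Fⁿ` is a free `A`-module of rank one: there is a vector `v ∈ Fⁿ`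
such that `a ↦ a·v` is a bijection from `A` to `Fⁿ`. -/
theorem etale_subalgebra_cyclic_vector
    (F : Type*) [Field F] (n : ℕ) (hn : 1 ≤ n)
    (A : Subalgebra F (Matrix (Fin n) (Fin n) F))
    (hcomm : ∀ a ∈ A, ∀ b ∈ A, a * b = b * a)
    (hred : ∀ a ∈ A, IsNilpotent a → a = 0)
    (hdim : Module.finrank F ↥A = n) :
    ∃ v : Fin n → F,
      Function.Bijective (fun a : ↥A => Matrix.mulVec (a : Matrix (Fin n) (Fin n) F) v) := by
  have : IsReduced A := ⟨fun a ha ↦ Subtype.ext (hred a a.2 (ha.map A.val))⟩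
  exact etale_subalgebra_cyclic_vector_general (hdim.trans (Module.finrank_fin_fun F).symm)
end

section
/- Let p be a prime, n ≥ 1, and let A be an étale subalgebra of Mₙ(ℚ_p) of dimension n, i.e. a commutative ℚ_p-subalgebra A of the n×n matrices over ℚ_p such that A is reduced (its only nilpotent element is 0) and dim_{ℚ_p} A = n. Set Λ = A ∩ Mₙ(ℤ_p) (the elements of A all of whose matrix entries are p-adic integers), and let Λ* = { y ∈ A : trace(y·x) ∈ ℤ_p for all x ∈ Λ }, where trace denotes the matrix trace. If Λ* ⊆ Λ (i.e. Λ is self-dual with respect to the trace pairing), then every element of A that is integral over ℤ_p lies in Λ; equivalently, Λ equals the integral closure of ℤ_p in A. -/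
/-!
An element `a` of `A` integral over `ℤ_p` lies in `Λ*`, hence in `Λ`: for `x ∈ Λ` the product
`a * x` is integral because `a` and `x` commute and `x` is a root of its own characteristic
polynomial, and an integral matrix `M` has integral trace. For the latter, if `P` is monic and
`P(M) = 0`, then `X - M` divides `P(X)`, so taking determinants the characteristic polynomial of `M`
divides a power of `P`; a monic divisor of a monic polynomial with integral coefficients has
integral coefficients.
-/

open Polynomial

section Integrality

variable {R : Type*} [CommRing R]

open scoped IsMulCommutative in
theorem isIntegral_mul_of_commute {B : Type*} [Ring B] [Algebra R B] {a b : B}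
    (hab : Commute a b) (ha : IsIntegral R a) (hb : IsIntegral R b) : IsIntegral R (a * b) := by
  let S := Algebra.adjoin R {a, b}
  have : IsMulCommutative S := Algebra.isMulCommutative_adjoin R <| by
    rintro _ (rfl | rfl) _ (rfl | rfl)
    exacts [rfl, hab, hab.symm, rfl]
  have isIntegral_coe_iff {x : S} : IsIntegral R (x : B) ↔ IsIntegral R x :=
    isIntegral_algHom_iff S.val Subtype.val_injective
  let a' : S := ⟨a, Algebra.subset_adjoin (by simp)⟩
  let b' : S := ⟨b, Algebra.subset_adjoin (by simp)⟩
  have ha' : IsIntegral R a' := isIntegral_coe_iff.mp ha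
  have hb' : IsIntegral R b' := isIntegral_coe_iff.mp hb
  exact isIntegral_coe_iff.mpr (ha'.mul hb')

theorem isIntegral_of_aeval_eq_zero_of_isIntegral_coeff {K B : Type*} [CommRing K] [Ring B]
    [Algebra R K] [Algebra R B] [Algebra K B] [IsScalarTower R K B] {b : B} {P : K[X]}
    (hP : P.Monic) (hcoeff : ∀ i, IsIntegral R (P.coeff i)) (hb : aeval b P = 0) :
    IsIntegral R b := by
  obtain ⟨Q, rfl, -, hQ⟩ := lifts_and_natDegree_eq_and_monic
    (P.lifts_iff_coeff_lifts (f := algebraMap (integralClosure R K) K) |>.mpr (by simpa)) hP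
  rw [aeval_map_algebraMap] at hb
  exact isIntegral_trans b ⟨Q, hQ, hb⟩

end Integrality

-- Divisibility is tested in `K[Y][X]`, which maps to `B[X]` by `Y ↦ b`, because the factor theorem
-- needs commutative coefficients.
theorem X_sub_C_dvd_map_algebraMap_of_aeval_eq_zero {K B : Type*} [CommRing K] [Ring B]
    [Algebra K B] {b : B} {P : K[X]} (hb : aeval b P = 0) :
    X - C b ∣ P.map (algebraMap K B) := by
  have dvd_generic : (X - C X : K[X][X]) ∣ P.map C - C P := by
    simpa [eval_map] using X_sub_C_dvd_sub_C_eval (a := (X : K[X])) (p := P.map C)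
  let evalCoeffs : K[X] →+* B := (aeval b : K[X] →ₐ[K] B)
  have evalCoeffs_comp_C : evalCoeffs.comp C = algebraMap K B := (aeval b).comp_algebraMap
  simpa [Polynomial.map_map, evalCoeffs_comp_C, show evalCoeffs P = 0 from hb,
    show evalCoeffs X = b from aeval_X b] using map_dvd (mapRingHom evalCoeffs) dvd_generic

section Matrix

variable {R K ι : Type*} [CommRing R] [CommRing K] [Algebra R K] [Fintype ι] [DecidableEq ι]

theorem charmatrix_dvd_smul_one_of_aeval_eq_zero {M : Matrix ι ι K} {P : K[X]}
    (hP : aeval M P = 0) : M.charmatrix ∣ P • 1 := by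
  rw [← map_dvd_iff matPolyEquiv, Matrix.matPolyEquiv_charmatrix, matPolyEquiv_smul_one]
  exact X_sub_C_dvd_map_algebraMap_of_aeval_eq_zero hP

theorem charpoly_dvd_pow_card_of_aeval_eq_zero {M : Matrix ι ι K} {P : K[X]}
    (hP : aeval M P = 0) : M.charpoly ∣ P ^ Fintype.card ι := by
  simpa [Matrix.charpoly] using
    map_dvd Matrix.detMonoidHom (charmatrix_dvd_smul_one_of_aeval_eq_zero hP)

theorem matrix_isIntegral_trace {M : Matrix ι ι K} (hM : IsIntegral R M) :
    IsIntegral R M.trace := by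
  obtain ⟨P, hP, hPM⟩ := hM
  have charpoly_dvd : M.charpoly ∣ (P ^ Fintype.card ι).map (algebraMap R K) := by
    rw [Polynomial.map_pow]
    exact charpoly_dvd_pow_card_of_aeval_eq_zero (by rwa [aeval_map_algebraMap])
  cases isEmpty_or_nonempty ι
  · simpa [Matrix.trace] using isIntegral_zero
  rw [M.trace_eq_neg_charpoly_coeff]
  exact (isIntegral_coeff_of_dvd _ _ (hP.pow _) M.charpoly_monic charpoly_dvd _).neg

theorem matrix_isIntegral_of_forall_apply {M : Matrix ι ι K}
    (hM : ∀ i j, IsIntegral R (M i j)) : IsIntegral R M := by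
  let N : Matrix ι ι (integralClosure R K) := Matrix.of fun i j => ⟨M i j, hM i j⟩
  exact isIntegral_trans _ <| N.isIntegral.map (Algebra.ofId (integralClosure R K) K).mapMatrix

theorem matrix_isIntegral_trace_mul_of_commute {M N : Matrix ι ι K} (hMN : Commute M N)
    (hM : IsIntegral R M) (hN : IsIntegral R N) : IsIntegral R (M * N).trace :=
  matrix_isIntegral_trace (isIntegral_mul_of_commute hMN hM hN)

theorem selfdual_order_contains_integral_elements_general {A : Set (Matrix ι ι K)}
    (hcomm : ∀ a ∈ A, ∀ b ∈ A, Commute a b)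
    (hselfdual : ∀ y ∈ A,
      (∀ x ∈ A, (∀ i j, IsIntegral R (x i j)) → IsIntegral R (y * x).trace) →
        ∀ i j, IsIntegral R (y i j)) :
    ∀ a ∈ A, IsIntegral R a → ∀ i j, IsIntegral R (a i j) := fun a ha ha_int =>
  hselfdual a ha fun x hx hx_int => matrix_isIntegral_trace_mul_of_commute (hcomm a ha x hx) ha_int
    (matrix_isIntegral_of_forall_apply hx_int)

end Matrix

theorem padicInt_isIntegral_iff_norm_le_one {p : ℕ} [Fact p.Prime] {x : ℚ_[p]} :
    IsIntegral ℤ_[p] x ↔ ‖x‖ ≤ 1 :=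
  IsIntegrallyClosed.isIntegral_iff.trans
    ⟨fun ⟨y, hy⟩ => hy ▸ y.norm_le_one, fun hx => ⟨⟨x, hx⟩, rfl⟩⟩

/-- Let `A ⊆ Mₙ(ℚ_p)` be an étale (commutative, reduced) subalgebra of
dimension `n` and `Λ = A ∩ Mₙ(ℤ_p)`. If the trace-dual `Λ*` is contained in
`Λ`, then every element of `A` integral over `ℤ_p` (i.e. killed by a monic
polynomial with `ℤ_p`-coefficients) lies in `Λ`. -/
theorem selfdual_order_contains_integral_elements
    (p : ℕ) [Fact p.Prime] (n : ℕ) (hn : 1 ≤ n)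
    (A : Subalgebra ℚ_[p] (Matrix (Fin n) (Fin n) ℚ_[p]))
    (hcomm : ∀ a ∈ A, ∀ b ∈ A, a * b = b * a)
    (hred : ∀ a ∈ A, IsNilpotent a → a = 0)
    (hdim : Module.finrank ℚ_[p] ↥A = n)
    (hselfdual : ∀ y ∈ A,
      (∀ x ∈ A, (∀ i j, ‖x i j‖ ≤ 1) → ‖Matrix.trace (y * x)‖ ≤ 1) →
        ∀ i j, ‖y i j‖ ≤ 1) :
    ∀ a ∈ A,
      (∃ P : Polynomial ℚ_[p], P.Monic ∧ (∀ i, ‖P.coeff i‖ ≤ 1) ∧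
        Polynomial.aeval a P = 0) →
      ∀ i j, ‖a i j‖ ≤ 1 := by
  simp only [← padicInt_isIntegral_iff_norm_le_one] at hselfdual ⊢
  exact fun a ha ⟨P, hP, hcoeff, hPa⟩ => selfdual_order_contains_integral_elements_general hcomm
    hselfdual a ha (isIntegral_of_aeval_eq_zero_of_isIntegral_coeff hP hcoeff hPa)
end

section
/- Let p be a prime and let A be a finite-dimensional commutative reduced ℚ_p-algebra of dimension n ≥ 1, equipped with its natural topology as a finite-dimensional ℚ_p-vector space. Let O_A be the integral closure of ℤ_p in A, and let Λ be a subring of O_A containing the image of ℤ_p which is a compact open subset of A. Let μ be a Haar measure on the additive group of A. Then μ( { x ∈ Λ : there exists y ∈ Λ with x·y = 1 } ) ≥ (1 − n/p) · μ(Λ). -/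
open MeasureTheory

/-!
By Gauss's lemma, an element `x` of `Λ` is a root of a monic polynomial `Q` over `ℤ_p` of degree at
most `n`. For `r ∈ ℤ_p`, the element `x - r` divides `Q(x) - Q(r) = -Q(r)` in `Λ`, so it is a unit
as soon as the class of `r` avoids the at most `n` roots of `Q` in the residue field. Hence every
point of `Λ` lies in at least `p - n` of the `p` translates of `Λˣ` by representatives of the
residue classes, and these translates all have the same measure.
-/

open IsLocalRing Module Polynomial

section Spectrum

variable {R B : Type*} [CommRing R] [Ring B] [Algebra R B]

theorem not_isUnit_eval_of_mem_spectrum {x : B} {r : R} {Q : R[X]} (hr : r ∈ spectrum R x)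
    (hQ : aeval x Q = 0) : ¬ IsUnit (Q.eval r) := by
  intro hunit
  obtain ⟨S, hS⟩ := X_sub_C_dvd_sub_C_eval (p := Q) (a := r)
  have hfactor : (algebraMap R B r - x) * aeval x S = algebraMap R B (Q.eval r) := by
    have := congrArg (aeval x) hS
    simp only [map_sub, map_mul, aeval_X, aeval_C, hQ, zero_sub] at this
    rw [← neg_sub x, neg_mul, ← this, neg_neg]
  have hcomm : Commute (algebraMap R B r - x) (aeval x S) := by
    have := (Commute.all (C r - X) S).map (aeval x)
    rwa [map_sub, aeval_C, aeval_X] at this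
  exact hr (hcomm.isUnit_mul_iff.1 (hfactor ▸ hunit.map (algebraMap R B))).1

theorem ncard_residue_image_spectrum_le [IsLocalRing R] {x : B} (hx : IsIntegral R x) :
    (residue R '' spectrum R x).ncard ≤ (minpoly R x).natDegree := by
  let Q := (minpoly R x).map (residue R)
  have hroots : residue R '' spectrum R x ⊆ Q.rootSet (ResidueField R) := by
    rintro _ ⟨r, hr, rfl⟩
    rw [mem_rootSet_of_ne ((minpoly.monic hx).map _).ne_zero, coe_aeval_eq_eval,
      eval_map_apply, residue_eq_zero_iff, mem_maximalIdeal]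
    exact not_isUnit_eval_of_mem_spectrum hr (minpoly.aeval R x)
  calc (residue R '' spectrum R x).ncard
      ≤ (Q.rootSet (ResidueField R)).ncard := Set.ncard_le_ncard hroots (Q.rootSet_finite _)
    _ ≤ Q.natDegree := Q.ncard_rootSet_le _
    _ ≤ (minpoly R x).natDegree := natDegree_map_le

theorem card_residueField_sub_natDegree_le_ncard_isUnit [IsLocalRing R] [Finite (ResidueField R)]
    {x : B} (hx : IsIntegral R x) {rep : ResidueField R → R}
    (hrep : Function.RightInverse rep (residue R)) :
    Nat.card (ResidueField R) - (minpoly R x).natDegree ≤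
      {a | IsUnit (x - algebraMap R B (rep a))}.ncard := by
  have hunit : (residue R '' spectrum R x)ᶜ ⊆ {a | IsUnit (x - algebraMap R B (rep a))} :=
    fun a ha ↦ IsUnit.sub_iff.1 <| spectrum.notMem_iff.1 fun hr ↦ ha ⟨rep a, hr, hrep a⟩
  calc Nat.card (ResidueField R) - (minpoly R x).natDegree
      ≤ Nat.card (ResidueField R) - (residue R '' spectrum R x).ncard :=
        Nat.sub_le_sub_left (ncard_residue_image_spectrum_le hx) _
    _ = (residue R '' spectrum R x)ᶜ.ncard := (Set.ncard_compl _).symm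
    _ ≤ {a | IsUnit (x - algebraMap R B (rep a))}.ncard := Set.ncard_le_ncard hunit

end Spectrum

theorem natDegree_minpoly_le_finrank {R : Type*} [CommRing R] [IsIntegrallyClosed R]
    (K : Type*) [Field K] [Algebra R K] [IsFractionRing R K]
    {A : Type*} [Ring A] [Algebra K A] [Algebra R A] [IsScalarTower R K A] [FiniteDimensional K A]
    {x : A} (hx : IsIntegral R x) : (minpoly R x).natDegree ≤ finrank K A := by
  have hdvd : minpoly K x ∣ (minpoly R x).map (algebraMap R K) :=
    minpoly.dvd _ _ (by rw [aeval_map_algebraMap, minpoly.aeval])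
  obtain ⟨Q, hQ⟩ := IsIntegrallyClosed.eq_map_mul_C_of_dvd K (minpoly.monic hx) hdvd
  rw [(minpoly.monic hx.tower_top).leadingCoeff, C_1, mul_one] at hQ
  have hinj := IsFractionRing.injective R K
  have hQmonic : Q.Monic := monic_of_injective hinj (hQ ▸ minpoly.monic hx.tower_top)
  have hQroot : aeval x Q = 0 := by rw [← aeval_map_algebraMap K, hQ, minpoly.aeval]
  calc (minpoly R x).natDegree
      ≤ Q.natDegree := natDegree_le_natDegree (minpoly.min R x hQmonic hQroot)
    _ = (minpoly K x).natDegree := by rw [← hQ, natDegree_map_eq_of_injective hinj]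
    _ ≤ finrank K A := minpoly.natDegree_le x

theorem natCast_mul_measure_le_sum_measure {α ι : Type*} [Fintype ι] [MeasurableSpace α]
    (μ : Measure α) {t : Set α} {s : ι → Set α} {m : ℕ}
    (h : ∀ x ∈ t, m ≤ {i | x ∈ s i}.ncard) : m * μ t ≤ ∑ i, μ (s i) := by
  classical
  -- Measurable hulls make the counting function measurable without enlarging the `μ (s i)`.
  let f (x : α) : ENNReal := ∑ i, (toMeasurable μ (s i)).indicator 1 x
  have hmeas (i : ι) : Measurable ((toMeasurable μ (s i)).indicator (1 : α → ENNReal)) :=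
    measurable_one.indicator (measurableSet_toMeasurable μ (s i))
  have hcount (x : α) (hx : x ∈ t) : (m : ENNReal) ≤ f x := by
    calc (m : ENNReal) ≤ ({i | x ∈ s i}.ncard : ENNReal) := mod_cast h x hx
      _ = ∑ i, (s i).indicator 1 x := by
        simp [Set.indicator_apply, Set.ncard_eq_toFinset_card']
      _ ≤ f x := Finset.sum_le_sum fun i _ ↦
        Set.indicator_le_indicator_of_subset (subset_toMeasurable μ (s i)) (by simp) x
  calc m * μ t ≤ m * μ {x | (m : ENNReal) ≤ f x} := by gcongr; exact hcount
    _ ≤ ∫⁻ x, f x ∂μ := mul_meas_ge_le_lintegral (Finset.measurable_fun_sum _ fun i _ ↦ hmeas i) _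
    _ = ∑ i, μ (s i) := by
      rw [lintegral_finsetSum _ fun i _ ↦ hmeas i]
      simp only [lintegral_indicator_one (measurableSet_toMeasurable μ _), measure_toMeasurable]

theorem card_residueField_sub_mul_measure_le_units {R : Type*} [CommRing R] [IsLocalRing R]
    [Finite (ResidueField R)] {A : Type*} [Ring A] [Algebra R A] [MeasurableSpace A]
    [MeasurableAdd A] (μ : Measure A) [μ.IsAddRightInvariant] (Λ : Subalgebra R A) {n : ℕ}
    (hint : ∀ x ∈ Λ, IsIntegral R x) (hdeg : ∀ x ∈ Λ, (minpoly R x).natDegree ≤ n) :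
    (Nat.card (ResidueField R) - n : ℕ) * μ (Λ : Set A) ≤
      Nat.card (ResidueField R) * μ {x : A | x ∈ Λ ∧ ∃ y ∈ Λ, x * y = 1} := by
  cases nonempty_fintype (ResidueField R)
  set U : Set A := {x : A | x ∈ Λ ∧ ∃ y ∈ Λ, x * y = 1}
  obtain ⟨rep, hrep⟩ := (residue_surjective (R := R)).hasRightInverse
  have hunit (x : Λ) (a : ResidueField R) (h : IsUnit (x - algebraMap R Λ (rep a))) :
      (x : A) + -algebraMap R A (rep a) ∈ U := by
    obtain ⟨y, hy⟩ := h.exists_right_inv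
    refine ⟨Λ.add_mem x.2 (Λ.neg_mem (Λ.algebraMap_mem _)), y, y.2, ?_⟩
    simpa [sub_eq_add_neg] using congrArg Subtype.val hy
  have hcount (x : A) (hx : x ∈ Λ) : Nat.card (ResidueField R) - n ≤
      {a | x ∈ (· + -algebraMap R A (rep a)) ⁻¹' U}.ncard := by
    have hval : Function.Injective Λ.val := Subtype.val_injective
    let z : Λ := ⟨x, hx⟩
    have hz : IsIntegral R z := (isIntegral_algHom_iff Λ.val hval).1 (hint x hx)
    have hzdeg : (minpoly R z).natDegree ≤ n := minpoly.algHom_eq Λ.val hval z ▸ hdeg x hx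
    calc Nat.card (ResidueField R) - n
        ≤ Nat.card (ResidueField R) - (minpoly R z).natDegree := Nat.sub_le_sub_left hzdeg _
      _ ≤ {a | IsUnit (z - algebraMap R Λ (rep a))}.ncard :=
        card_residueField_sub_natDegree_le_ncard_isUnit hz hrep
      _ ≤ _ := Set.ncard_le_ncard fun a ↦ hunit z a
  calc (Nat.card (ResidueField R) - n : ℕ) * μ (Λ : Set A)
      ≤ ∑ a, μ ((· + -algebraMap R A (rep a)) ⁻¹' U) := natCast_mul_measure_le_sum_measure μ hcount
    _ = Nat.card (ResidueField R) * μ U := by simp [measure_preimage_add_right]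

theorem ennreal_ofReal_one_sub_natCast_div {n q : ℕ} (hq : q ≠ 0) :
    ENNReal.ofReal (1 - (n : ℝ) / q) = (q - n : ℕ) / q := by
  have hq' : (0 : ℝ) < q := by positivity
  rw [ENNReal.ofReal_sub _ (by positivity), ENNReal.ofReal_one, ENNReal.ofReal_div_of_pos hq',
    ENNReal.ofReal_natCast, ENNReal.ofReal_natCast, ENNReal.natCast_sub,
    ENNReal.sub_div (by simp [hq]), ENNReal.div_self (by simpa using hq) (by simp)]

theorem exists_padicInt_monic_aeval_map_eq_zero {p : ℕ} [Fact p.Prime] {A : Type*} [Ring A]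
    [Algebra ℚ_[p] A] {x : A}
    (h : ∃ P : ℚ_[p][X], P.Monic ∧ (∀ i, ‖P.coeff i‖ ≤ 1) ∧ aeval x P = 0) :
    ∃ Q : ℤ_[p][X], Q.Monic ∧ aeval x (Q.map (algebraMap ℤ_[p] ℚ_[p])) = 0 := by
  obtain ⟨P, hmonic, hcoeff, hroot⟩ := h
  have hlifts : P ∈ lifts (algebraMap ℤ_[p] ℚ_[p]) :=
    (lifts_iff_coeff_lifts P).2 fun i ↦ ⟨⟨P.coeff i, hcoeff i⟩, rfl⟩
  obtain ⟨Q, hQ, -, hQmonic⟩ := lifts_and_natDegree_eq_and_monic hlifts hmonic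
  exact ⟨Q, hQmonic, hQ ▸ hroot⟩

theorem haar_measure_units_of_order_ge_general
    (R : Type*) [CommRing R] [IsLocalRing R] [IsIntegrallyClosed R] [Finite (ResidueField R)]
    (K : Type*) [Field K] [Algebra R K] [IsFractionRing R K]
    {A : Type*} [Ring A] [Algebra K A] [FiniteDimensional K A]
    [MeasurableSpace A] [MeasurableAdd A] (Λ : Subring A)
    (hΛint : ∀ x ∈ Λ, ∃ Q : R[X], Q.Monic ∧ aeval x (Q.map (algebraMap R K)) = 0)
    (hΛR : ∀ r : R, algebraMap K A (algebraMap R K r) ∈ Λ)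
    (μ : Measure A) [μ.IsAddRightInvariant] :
    ENNReal.ofReal (1 - (finrank K A : ℝ) / Nat.card (ResidueField R)) * μ (Λ : Set A) ≤
      μ {x : A | x ∈ Λ ∧ ∃ y ∈ Λ, x * y = 1} := by
  let : Algebra R A := Algebra.compHom A (algebraMap R K)
  have : IsScalarTower R K A := .of_algebraMap_eq' rfl
  let Λ' : Subalgebra R A := { Λ with algebraMap_mem' := hΛR }
  have hint (x : A) (hx : x ∈ Λ') : IsIntegral R x := by
    obtain ⟨Q, hQ, hroot⟩ := hΛint x hx
    exact ⟨Q, hQ, by rwa [aeval_map_algebraMap] at hroot⟩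
  have hmeasure := card_residueField_sub_mul_measure_le_units μ Λ' hint fun x hx ↦
    natDegree_minpoly_le_finrank K (hint x hx)
  rw [ennreal_ofReal_one_sub_natCast_div Nat.card_pos.ne', ENNReal.mul_comm_div, ← mul_div_assoc]
  exact ENNReal.div_le_of_le_mul' hmeasure

/-- Let `A` be an `n`-dimensional commutative reduced `ℚ_p`-algebra with its
natural topology, `Λ ⊆ A` a compact open subring contained in the integral
closure of `ℤ_p` and containing the image of `ℤ_p`, and `μ` a Haar measure on
the additive group of `A`. Then the set of units of `Λ` has measure at least
`(1 − n/p)·μ(Λ)`. -/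
theorem haar_measure_units_of_order_ge
    (p : ℕ) [Fact p.Prime] (n : ℕ) (hn : 1 ≤ n)
    (A : Type*) [CommRing A] [Algebra ℚ_[p] A]
    [TopologicalSpace A] [IsTopologicalRing A] [ContinuousSMul ℚ_[p] A] [T2Space A]
    [MeasurableSpace A] [BorelSpace A]
    (hred : ∀ a : A, IsNilpotent a → a = 0)
    (hdim : Module.finrank ℚ_[p] A = n)
    (Λ : Subring A)
    (hΛint : ∀ x ∈ Λ, ∃ P : Polynomial ℚ_[p], P.Monic ∧ (∀ i, ‖P.coeff i‖ ≤ 1) ∧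
      Polynomial.aeval x P = 0)
    (hΛZp : ∀ z : ℤ_[p], algebraMap ℚ_[p] A (z : ℚ_[p]) ∈ Λ)
    (hΛcompact : IsCompact (Λ : Set A)) (hΛopen : IsOpen (Λ : Set A))
    (μ : Measure A) [μ.IsAddHaarMeasure] :
    ENNReal.ofReal (1 - (n : ℝ) / p) * μ (Λ : Set A) ≤
      μ {x : A | x ∈ Λ ∧ ∃ y ∈ Λ, x * y = 1} := by
  have := FiniteDimensional.of_finrank_pos (hn.trans_eq hdim.symm)
  simpa [hdim, Nat.card_congr PadicInt.residueField.toEquiv] using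
    haar_measure_units_of_order_ge_general ℤ_[p] ℚ_[p] Λ
      (fun x hx ↦ exists_padicInt_monic_aeval_map_eq_zero (hΛint x hx)) hΛZp μ
end

section
/- Let G be a compact metrizable abelian topological group. For each i ∈ ℕ let H_i be a closed subgroup of G, let m_i be the Haar probability measure of H_i viewed as a Borel probability measure on G, let g_i ∈ G, and let μ_i be the translate of m_i by g_i (the pushforward of m_i under x ↦ x·g_i). If the sequence (μ_i) converges, in the topology of weak convergence of Borel probability measures on G, to a probability measure μ, then there exist a closed subgroup H of G and an element g ∈ G such that μ is the translate by g of the Haar probability measure of H. -/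
open MeasureTheory

/-!
A measure on `G` is a translate `x ↦ x * g` of the Haar probability measure of a closed subgroup
if and only if any two points `x`, `y` of its support differ by a left translation `x / y` which
preserves it. This condition survives weak limits: a point of the support of the limit is
approximated by points of the supports of the approximating measures, and the pairs `(k, μ)` such
that left translation by `k` preserves `μ` form a closed set, because the translate of `μ` by `k`
depends continuously on `(k, μ)`.
-/

open Filter Topology TopologicalSpace
open scoped BoundedContinuousFunction

section WeakTopology

variable {X : Type*} [TopologicalSpace X] [MeasurableSpace X] [OpensMeasurableSpace X]

theorem continuous_probabilityMeasure_map_uncurry {A Y : Type*}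
    [SecondCountableTopology X] [PseudoMetrizableSpace X]
    [TopologicalSpace A] [SecondCountableTopology A] [PseudoMetrizableSpace A]
    [TopologicalSpace Y] [MeasurableSpace Y] [BorelSpace Y]
    {f : A → X → Y} (hf : Continuous (Function.uncurry f)) :
    Continuous fun p : A × ProbabilityMeasure X =>
      p.2.map (hf.uncurry_left p.1).measurable.aemeasurable := by
  borelize A
  have hprod : Continuous fun p : A × ProbabilityMeasure X => (diracProba p.1).prod p.2 :=
    ProbabilityMeasure.continuous_prod.comp
      ((continuous_diracProba.comp continuous_fst).prodMk continuous_snd)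
  convert (ProbabilityMeasure.continuous_map hf).comp hprod with p
  apply Subtype.ext
  change Measure.map (f p.1) p.2 =
    Measure.map (Function.uncurry f) ((Measure.dirac p.1).prod p.2)
  rw [Measure.dirac_prod, Measure.map_map hf.measurable measurable_prodMk_left]
  rfl

theorem lowerHemicontinuous_probabilityMeasure_support [HasOuterApproxClosed X]
    [HereditarilyLindelofSpace X] :
    LowerHemicontinuous fun μ : ProbabilityMeasure X => (μ : Measure X).support := by
  refine lowerHemicontinuous_iff.2 fun μ => lowerHemicontinuousAt_iff.2 ?_
  rintro U hU ⟨x, hx, hxU⟩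
  have hpos : 0 < (μ : Measure X) U :=
    (Measure.mem_support_iff_forall x).1 hx U (hU.mem_nhds hxU)
  have hliminf := ProbabilityMeasure.le_liminf_measure_open_of_tendsto (tendsto_id (x := 𝓝 μ)) hU
  filter_upwards [eventually_lt_of_lt_liminf (hpos.trans_le hliminf)] with ν hν
  rw [Set.inter_comm]
  exact Measure.nonempty_inter_support_of_pos hν

end WeakTopology

section LeftStabilizer

variable {G : Type*} [Group G] [MeasurableSpace G] [MeasurableMul G]

/-- The stabilizer of the measure `μ` under left translations: the group of all `k` such that
`x ↦ k * x` preserves `μ`. -/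
def leftStabilizer (μ : Measure G) : Subgroup G where
  carrier := {k | μ.map (fun x => k * x) = μ}
  one_mem' := by simp
  mul_mem' {a b} ha hb := by
    have hab := (MeasurePreserving.mk (measurable_const_mul a) ha).comp
      ⟨measurable_const_mul b, hb⟩
    simpa only [Function.comp_def, ← mul_assoc, Set.mem_ofPred_eq] using hab.map_eq
  inv_mem' {a} ha :=
    (MeasurePreserving.symm (MeasurableEquiv.mulLeft a) ⟨measurable_const_mul a, ha⟩).map_eq

theorem mem_leftStabilizer {μ : Measure G} {k : G} :
    k ∈ leftStabilizer μ ↔ μ.map (fun x => k * x) = μ :=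
  Iff.rfl

theorem leftStabilizer_le_leftStabilizer_map_mul_right (μ : Measure G) (g : G) :
    leftStabilizer μ ≤ leftStabilizer (μ.map (fun x => x * g)) := fun k hk =>
  ((measurable_mul_const g).measurePreserving μ |>.of_semiconj
    ⟨measurable_const_mul k, hk⟩ (fun x => mul_assoc k x g) (measurable_const_mul k)).map_eq

end LeftStabilizer

section IsTranslatedHaar

variable {G : Type*} [Group G] [MeasurableSpace G] [TopologicalSpace G]

/-- `μ` is a homogeneous measure: the translate by some `g` of the Haar probability measure `ν` of
some closed subgroup `H`, where `ν` is encoded as a left `H`-invariant probability measure on `G`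
giving full mass to `H`. Translating on the right keeps the left invariance of `ν` when `G` is not
commutative. -/
def IsTranslatedHaar (μ : Measure G) : Prop :=
  ∃ (H : Subgroup G) (g : G) (ν : Measure G),
    IsClosed (H : Set G) ∧ IsProbabilityMeasure ν ∧
    ν (H : Set G) = 1 ∧ (∀ h ∈ H, ν.map (fun x => h * x) = ν) ∧
    μ = ν.map (fun x => x * g)

variable [IsTopologicalGroup G] [BorelSpace G]

theorem IsTranslatedHaar.div_mem_leftStabilizer {μ : Measure G} (hμ : IsTranslatedHaar μ) {x y : G}
    (hx : x ∈ μ.support) (hy : y ∈ μ.support) : x / y ∈ leftStabilizer μ := by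
  obtain ⟨H, g, ν, hHclosed, hprob, hfull, hinv, rfl⟩ := hμ
  have hcoset : IsClosed {z | z / g ∈ H} := hHclosed.preimage (continuous_div_right' g)
  have hsupport : (ν.map (fun x => x * g)).support ⊆ {z | z / g ∈ H} := by
    refine Measure.support_subset_of_isClosed hcoset ?_
    refine (ae_map_iff (measurable_mul_const g).aemeasurable hcoset.measurableSet).2 ?_
    have hmem : ∀ᵐ x ∂ν, x ∈ H := (mem_ae_iff_prob_eq_one hHclosed.measurableSet).2 hfull
    simpa only [mul_div_cancel_right] using hmem
  have hxy : x / y ∈ H := by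
    simpa only [div_div_div_cancel_right] using H.div_mem (hsupport hx) (hsupport hy)
  exact leftStabilizer_le_leftStabilizer_map_mul_right ν g (hinv _ hxy)

variable [SecondCountableTopology G]

theorem isClosed_setOf_mem_leftStabilizer :
    IsClosed {p : G × ProbabilityMeasure G | p.1 ∈ leftStabilizer (p.2 : Measure G)} := by
  have hmul : Continuous (Function.uncurry fun k x : G => k * x) := continuous_mul
  convert isClosed_eq (continuous_probabilityMeasure_map_uncurry hmul) continuous_snd using 3
  rw [mem_leftStabilizer, ← ProbabilityMeasure.toMeasure_map]
  exact ProbabilityMeasure.toMeasure_injective.eq_iff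

theorem isClosed_leftStabilizer (μ : ProbabilityMeasure G) :
    IsClosed (leftStabilizer (μ : Measure G) : Set G) :=
  isClosed_setOf_mem_leftStabilizer.preimage (Continuous.prodMk_left μ)

theorem IsTranslatedHaar.of_div_mem_leftStabilizer {μ : Measure G} [IsProbabilityMeasure μ]
    (h : ∀ x ∈ μ.support, ∀ y ∈ μ.support, x / y ∈ leftStabilizer μ) : IsTranslatedHaar μ := by
  obtain ⟨y, hy⟩ := Measure.nonempty_support (IsProbabilityMeasure.ne_zero μ)
  have hclosed : IsClosed (leftStabilizer μ : Set G) := isClosed_leftStabilizer ⟨μ, ‹_›⟩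
  have hmeas := (measurable_mul_const y⁻¹).aemeasurable (μ := μ)
  have hprob : IsProbabilityMeasure (μ.map (fun x => x * y⁻¹)) :=
    Measure.isProbabilityMeasure_map hmeas
  refine ⟨leftStabilizer μ, y, μ.map (fun x => x * y⁻¹), hclosed, hprob, ?full, ?inv, ?translate⟩
  case full =>
    refine (mem_ae_iff_prob_eq_one hclosed.measurableSet).1 ?_
    refine (ae_map_iff (p := (· ∈ leftStabilizer μ)) hmeas hclosed.measurableSet).2 ?_
    filter_upwards [Measure.support_mem_ae (μ := μ)] with x hx
    simpa only [div_eq_mul_inv] using h x hx y hy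
  case inv => exact leftStabilizer_le_leftStabilizer_map_mul_right μ y⁻¹
  case translate =>
    rw [Measure.map_map (measurable_mul_const y) (measurable_mul_const y⁻¹)]
    simp [Function.comp_def]

theorem isClosed_setOf_isTranslatedHaar :
    IsClosed {μ : ProbabilityMeasure G | IsTranslatedHaar (μ : Measure G)} := by
  refine isClosed_iff_frequently.2 fun μ hμ => .of_div_mem_leftStabilizer fun x hx y hy => ?_
  refine isClosed_iff_nhds.1 isClosed_setOf_mem_leftStabilizer (x / y, μ) fun W hW => ?_
  obtain ⟨U, hU, V, hV, hUV⟩ := mem_nhds_prod_iff.1 hW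
  obtain ⟨S, T, hS, hxS, hT, hyT, hST⟩ :=
    mem_nhds_prod_iff'.1 (continuous_div'.continuousAt (x := (x, y)) hU)
  have hsuppS := lowerHemicontinuous_probabilityMeasure_support μ S ⟨hS, x, hx, hxS⟩
  have hsuppT := lowerHemicontinuous_probabilityMeasure_support μ T ⟨hT, y, hy, hyT⟩
  obtain ⟨ν, hν, hνV, ⟨-, x', hx', hxS'⟩, ⟨-, y', hy', hyT'⟩⟩ :=
    (hμ.and_eventually (Eventually.and hV (hsuppS.and hsuppT))).exists
  have hxyU : x' / y' ∈ U := @hST (x', y') ⟨hxS', hyT'⟩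
  exact ⟨(x' / y', ν), hUV ⟨hxyU, hνV⟩, hν.div_mem_leftStabilizer hx' hy'⟩

theorem weak_limit_of_translated_haar_is_translated_haar_general {ι : Type*} {l : Filter ι}
    [l.NeBot] {μs : ι → Measure G} {μ : Measure G} [IsProbabilityMeasure μ]
    (hμs : ∀ i, IsTranslatedHaar (μs i))
    (hconv : ∀ f : G →ᵇ ℝ, Tendsto (fun i => ∫ x, f x ∂(μs i)) l (𝓝 (∫ x, f x ∂μ))) :
    IsTranslatedHaar μ := by
  have hprob (i : ι) : IsProbabilityMeasure (μs i) := by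
    obtain ⟨-, g, ν, -, hν, -, -, hνg⟩ := hμs i
    exact hνg ▸ Measure.isProbabilityMeasure_map (measurable_mul_const g).aemeasurable
  let νs (i : ι) : ProbabilityMeasure G := ⟨μs i, hprob i⟩
  let ν : ProbabilityMeasure G := ⟨μ, ‹_›⟩
  have hlim : Tendsto νs l (𝓝 ν) :=
    ProbabilityMeasure.tendsto_iff_forall_integral_tendsto.2 hconv
  exact isClosed_setOf_isTranslatedHaar.mem_of_tendsto hlim (.of_forall hμs)

end IsTranslatedHaar

/-- On a compact metrizable abelian topological group, a weak limit of
translates of Haar probability measures of closed subgroups is again a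
translate of the Haar probability measure of a closed subgroup. Here "the Haar
probability measure of a closed subgroup `H`, viewed on `G`" is characterized
as a Borel probability measure giving `H` full mass and invariant under
translation by every element of `H`. -/
theorem weak_limit_of_translated_haar_is_translated_haar
    (G : Type*) [TopologicalSpace G] [CompactSpace G]
    [TopologicalSpace.MetrizableSpace G] [CommGroup G] [IsTopologicalGroup G]
    [MeasurableSpace G] [BorelSpace G]
    (H : ℕ → Subgroup G) (hHclosed : ∀ i, IsClosed (H i : Set G))
    (m : ℕ → Measure G) (hprob : ∀ i, IsProbabilityMeasure (m i))
    (hfull : ∀ i, m i (H i : Set G) = 1)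
    (hinv : ∀ i, ∀ h ∈ H i, (m i).map (fun x => h * x) = m i)
    (g : ℕ → G)
    (μ : Measure G) [IsProbabilityMeasure μ]
    (hconv : ∀ f : C(G, ℝ),
      Filter.Tendsto (fun i => ∫ x, f x ∂((m i).map (fun x => x * g i)))
        Filter.atTop (nhds (∫ x, f x ∂μ))) :
    ∃ (Hlim : Subgroup G) (glim : G) (ν : Measure G),
      IsClosed (Hlim : Set G) ∧ IsProbabilityMeasure ν ∧
      ν (Hlim : Set G) = 1 ∧ (∀ h ∈ Hlim, ν.map (fun x => h * x) = ν) ∧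
      μ = ν.map (fun x => x * glim) :=
  weak_limit_of_translated_haar_is_translated_haar_general
    (fun i => ⟨H i, g i, m i, hHclosed i, hprob i, hfull i, hinv i, rfl⟩)
    fun f => hconv f.toContinuousMap
end
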